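/- For every well-formed formula Q and all well-formed formulas A, B of the implicational propositional calculus, the formula QQA ⊃ [QB ⊃ Q(A ⊃ B)] is a theorem of IPC. -/

import Mathlib

/-- Well-formed formulas of the implicational propositional calculus:
propositional variables (indexed by ℕ, so the set of wfs is countable)
and the single connective ⊃. -/
inductive Wf where
  | var : ℕ → Wf
  | imp : Wf → Wf → Wf
deriving DecidableEq

infixr:60 " ⊃' " => Wf.imp

/-- `Deduces Γ A` : `A` is deducible from the set `Γ` of extra axioms/hypotheses,
using the three axiom schemes of IPC (including the Peirce scheme) and modus ponens.
Theorems of IPC are `Deduces ∅ A`; for an extension `M` of IPC with extra-axiom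
set `E`, `T(M)` is `Deduces E`, and deducibility from hypotheses `Γ` in `M` is
`Deduces (E ∪ Γ)`. -/
inductive Deduces : Set Wf → Wf → Prop where
  | hyp : ∀ {Γ : Set Wf} {A : Wf}, A ∈ Γ → Deduces Γ A
  | ax1 : ∀ {Γ : Set Wf} (A B : Wf), Deduces Γ (A ⊃' (B ⊃' A))
  | ax2 : ∀ {Γ : Set Wf} (A B C : Wf),
      Deduces Γ ((A ⊃' (B ⊃' C)) ⊃' ((A ⊃' B) ⊃' (A ⊃' C)))
  | peirce : ∀ {Γ : Set Wf} (A B : Wf), Deduces Γ (((A ⊃' B) ⊃' A) ⊃' A)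
  | mp : ∀ {Γ : Set Wf} {A B : Wf}, Deduces Γ (A ⊃' B) → Deduces Γ A → Deduces Γ B

namespace Deduces

variable {Γ : Set Wf} {A B C : Wf}

theorem imp_self (A : Wf) : Deduces Γ (A ⊃' A) :=
  mp (mp (ax2 A (A ⊃' A) A) (ax1 A (A ⊃' A))) (ax1 A A)

theorem imp_of_right (A : Wf) (hB : Deduces Γ B) : Deduces Γ (A ⊃' B) :=
  mp (ax1 B A) hB

theorem imp_mp (hABC : Deduces Γ (A ⊃' B ⊃' C)) (hAB : Deduces Γ (A ⊃' B)) :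
    Deduces Γ (A ⊃' C) :=
  mp (mp (ax2 A B C) hABC) hAB

theorem imp_trans (hAB : Deduces Γ (A ⊃' B)) (hBC : Deduces Γ (B ⊃' C)) :
    Deduces Γ (A ⊃' C) :=
  imp_mp (imp_of_right A hBC) hAB

theorem deduction_theorem (h : Deduces (insert A Γ) B) : Deduces Γ (A ⊃' B) := by
  induction h with
  | hyp hmem =>
    rcases hmem with rfl | hmem
    · exact imp_self _
    · exact imp_of_right A (hyp hmem)
  | ax1 C D => exact imp_of_right A (ax1 C D)
  | ax2 C D E => exact imp_of_right A (ax2 C D E)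
  | peirce C D => exact imp_of_right A (peirce C D)
  | mp _ _ ih_imp ih_left => exact imp_mp ih_imp ih_left

end Deduces

/-- Theorem 1(6): QQA ⊃ [QB ⊃ Q(A ⊃ B)] is a theorem of IPC. -/
theorem stmt_5 (Q A B : Wf) :
    Deduces ∅ (((A ⊃' Q) ⊃' Q) ⊃' ((B ⊃' Q) ⊃' ((A ⊃' B) ⊃' Q))) := by
  iterate 3 apply Deduces.deduction_theorem
  let Γ : Set Wf := insert (A ⊃' B) (insert (B ⊃' Q) (insert ((A ⊃' Q) ⊃' Q) ∅))
  have hAB : Deduces Γ (A ⊃' B) := .hyp (by simp [Γ])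
  have hBQ : Deduces Γ (B ⊃' Q) := .hyp (by simp [Γ])
  have hQQA : Deduces Γ ((A ⊃' Q) ⊃' Q) := .hyp (by simp [Γ])
  exact hQQA.mp (hAB.imp_trans hBQ)
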